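/- Let d ≥ 1, 1 ≤ p < ∞, m ∈ ℤ_{≥0} with m > d/p, and δ ≥ 0. There exists a constant C > 0 such that for all f, g ∈ C_c^∞(ℝ^d), ‖f · g‖_{H^{m,p}_δ} ≤ C · ‖f‖_{H^{m,p}_δ} · ‖g‖_{H^{m,p}_δ} (the weighted Sobolev space H^{m,p}_δ(ℝ^d) is a Banach algebra). -/

import Mathlib

open MeasureTheory

/-- The Japanese bracket `⟨x⟩ = √(1 + |x|²)`. -/
noncomputable def jb {d : ℕ} (x : EuclideanSpace ℝ (Fin d)) : ℝ := Real.sqrt (1 + ‖x‖ ^ 2)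

/-- Partial derivative in the `i`-th coordinate direction. -/
noncomputable def pderiv' {d : ℕ} {F : Type*} [NormedAddCommGroup F] [NormedSpace ℝ F]
    (i : Fin d) (f : EuclideanSpace ℝ (Fin d) → F) : EuclideanSpace ℝ (Fin d) → F :=
  fun x => fderiv ℝ f x (EuclideanSpace.single i 1)

/-- Multi-index derivative `∂^α f`. -/
noncomputable def mderiv {d : ℕ} {F : Type*} [NormedAddCommGroup F] [NormedSpace ℝ F]
    (α : Fin d → ℕ) (f : EuclideanSpace ℝ (Fin d) → F) : EuclideanSpace ℝ (Fin d) → F :=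
  (List.finRange d).foldr (fun i g => (pderiv' i)^[α i] g) f

/-- Weighted `L^p` norm `‖⟨x⟩^δ f‖_{L^p}`. -/
noncomputable def wLp {d : ℕ} {F : Type*} [NormedAddCommGroup F] [NormedSpace ℝ F]
    (p δ : ℝ) (f : EuclideanSpace ℝ (Fin d) → F) : ℝ :=
  (eLpNorm (fun x => jb x ^ δ • f x) (ENNReal.ofReal p) volume).toReal

/-- Weighted Sobolev norm `‖f‖_{H^{m,p}_δ} = Σ_{|α| ≤ m} ‖⟨x⟩^δ ∂^α f‖_{L^p}`. -/
noncomputable def Hnorm (d m : ℕ) {F : Type*} [NormedAddCommGroup F] [NormedSpace ℝ F]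
    (p δ : ℝ) (f : EuclideanSpace ℝ (Fin d) → F) : ℝ :=
  ∑ α ∈ Finset.univ.filter (fun α : Fin d → Fin (m + 1) => ∑ i, (α i : ℕ) ≤ m),
    wLp p δ (mderiv (fun i => (α i : ℕ)) f)

open scoped ENNReal

namespace WS

lemma jensenW {α : Type*} [MeasurableSpace α] (μ : Measure α) {K f : α → ℝ≥0∞}
    (hK : AEMeasurable K μ) (hf : AEMeasurable f μ) {q : ℝ} (hq : 1 ≤ q) :
    (∫⁻ a, K a * f a ∂μ) ^ q ≤ (∫⁻ a, K a ∂μ) ^ (q - 1) * ∫⁻ a, K a * f a ^ q ∂μ := by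
  have hq0 : 0 < q := by linarith
  have h1 : ∀ a, K a * f a = K a ^ (1 - 1/q) * (K a * f a ^ q) ^ (1/q) := by
    intro a
    have hle : 0 ≤ 1 - 1/q := by
      rw [sub_nonneg, div_le_one hq0]; exact hq
    rw [ENNReal.mul_rpow_of_nonneg _ _ (by positivity), ← mul_assoc,
      ← ENNReal.rpow_add_of_nonneg _ _ hle (by positivity), ← ENNReal.rpow_mul,
      mul_one_div_cancel hq0.ne']
    simp
  have h2 := ENNReal.lintegral_mul_norm_pow_le (μ := μ) hK (hK.mul (hf.pow_const q))
    (p := 1 - 1/q) (q := 1/q) (by rw [sub_nonneg, div_le_one hq0]; exact hq) (by positivity) (by ring)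
  calc (∫⁻ a, K a * f a ∂μ) ^ q
      = (∫⁻ a, K a ^ (1 - 1/q) * (K a * f a ^ q) ^ (1/q) ∂μ) ^ q := by simp_rw [← h1]
    _ ≤ ((∫⁻ a, K a ∂μ) ^ (1 - 1/q) * (∫⁻ a, K a * f a ^ q ∂μ) ^ (1/q)) ^ q := by
        gcongr; exact h2
    _ = _ := by
        rw [ENNReal.mul_rpow_of_nonneg _ _ hq0.le, ← ENNReal.rpow_mul, ← ENNReal.rpow_mul,
          one_div_mul_cancel hq0.ne', ENNReal.rpow_one]
        congr 2
        field_simp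

variable {d : ℕ}

local notation "EE" => EuclideanSpace ℝ (Fin d)

lemma kernel_int {β : ℝ} (hβ : β < 1) :
    ∫⁻ s in Set.Ioo (0:ℝ) 1, ENNReal.ofReal s ^ (-β) ≠ ∞ := by
  have h : IntervalIntegrable (fun x : ℝ => x ^ (-β)) volume 0 1 :=
    intervalIntegral.intervalIntegrable_rpow' (by linarith)
  rw [intervalIntegrable_iff_integrableOn_Ioo_of_le zero_le_one] at h
  have h2 := h.lintegral_lt_top
  refine ne_of_lt (lt_of_le_of_lt (le_of_eq ?_) h2)
  refine setLIntegral_congr_fun measurableSet_Ioo ?_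
  intro s hs
  exact ENNReal.ofReal_rpow_of_pos hs.1

/-- average -/
noncomputable def hh (V : EE → ℝ≥0∞) (s : ℝ) (x : EE) : ℝ≥0∞ :=
  ∫⁻ z in Metric.ball (0 : EE) 1, V (x + s • z)

lemma meas_hh {V : EE → ℝ≥0∞} (hV : Measurable V) :
    Measurable (fun y : ℝ × EE => hh V y.1 y.2) := by
  unfold hh
  refine Measurable.lintegral_prod_right' (f := fun y : (ℝ × EE) × EE => V (y.1.2 + y.1.1 • y.2)) ?_
  exact hV.comp (by fun_prop)

lemma meas_hh_s {V : EE → ℝ≥0∞} (hV : Measurable V) (s : ℝ) : Measurable (hh V s) :=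
  (meas_hh hV).comp (measurable_prodMk_left (x := s))

lemma meas_hh_x {V : EE → ℝ≥0∞} (hV : Measurable V) (x : EE) : Measurable (fun s => hh V s x) :=
  (meas_hh hV).comp (measurable_prodMk_right (y := x))

lemma hh_pow_le {V : EE → ℝ≥0∞} (hV : Measurable V) {p : ℝ} (hp : 1 ≤ p) (s : ℝ) (x : EE) :
    hh V s x ^ p ≤ volume (Metric.ball (0 : EE) 1) ^ (p - 1) * hh (fun y => V y ^ p) s x := by
  have := jensenW (volume.restrict (Metric.ball (0 : EE) 1)) (K := fun _ => 1)
    (f := fun z => V (x + s • z)) (by fun_prop) ((hV.comp (by fun_prop)).aemeasurable) hp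
  simpa [hh] using this

lemma hh_le_full {V : EE → ℝ≥0∞} (hV : Measurable V) {s : ℝ} (hs : 0 < s) (x : EE) :
    hh V s x ≤ ENNReal.ofReal s ^ (-(d:ℝ)) * ∫⁻ y, V y := by
  have h1 : hh V s x ≤ ∫⁻ z : EE, V (x + s • z) := setLIntegral_le_lintegral _ _
  refine h1.trans (le_of_eq ?_)
  have h2 : ∫⁻ z : EE, V (x + s • z) = ∫⁻ z, V (x + z) ∂(Measure.map (s • ·) (volume : Measure EE)) := by
    have hm : Measurable (fun z => V (x + z)) := hV.comp (measurable_const_add x)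
    rw [lintegral_map hm (by fun_prop)]
  rw [h2, Measure.map_addHaar_smul _ hs.ne', lintegral_smul_measure, lintegral_add_left_eq_self]
  simp only [finrank_euclideanSpace, Fintype.card_fin, smul_eq_mul]
  congr 1
  rw [ENNReal.ofReal_rpow_of_pos hs, Real.rpow_neg hs.le, Real.rpow_natCast, abs_of_pos (by positivity)]

lemma int_hh {V : EE → ℝ≥0∞} (hV : Measurable V) (s : ℝ) :
    ∫⁻ x, hh V s x = volume (Metric.ball (0 : EE) 1) * ∫⁻ y, V y := by
  unfold hh
  rw [lintegral_lintegral_swap]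
  · simp_rw [lintegral_add_right_eq_self]
    simp [mul_comm]
  · exact (hV.comp (by fun_prop)).aemeasurable

lemma hh_sup {V : EE → ℝ≥0∞} (hV : Measurable V) {r : ℝ} (hr : 0 < r) (hr1 : r ≤ 1) 
    {s : ℝ} (hs : 0 < s) (x : EE) :
    hh V s x ≤ (volume (Metric.ball (0 : EE) 1) ^ (1/r - 1)) ^ r * ENNReal.ofReal s ^ (-(d * r : ℝ)) *
      (∫⁻ y, V y ^ (1/r)) ^ r := by
  have hp : 1 ≤ 1 / r := by rw [le_div_iff₀ hr]; linarith
  have h1 := (hh_pow_le hV hp s x).trans (mul_le_mul_right (hh_le_full (hV.pow_const (1/r)) hs x) _)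
  have h2 := ENNReal.rpow_le_rpow h1 hr.le
  rw [← ENNReal.rpow_mul, one_div_mul_cancel hr.ne', ENNReal.rpow_one] at h2
  refine h2.trans (le_of_eq ?_)
  rw [ENNReal.mul_rpow_of_nonneg _ _ hr.le, ENNReal.mul_rpow_of_nonneg _ _ hr.le,
    ← ENNReal.rpow_mul (ENNReal.ofReal s), mul_assoc]
  simp

lemma lemA (r r' : ℝ) (hr : 0 < r) (hr1 : r ≤ 1) (hr' : 0 ≤ r') (hrr : r' ≤ r)
    (hd : d * (r - r') < 1) :
    ∃ C : ℝ≥0∞, C ≠ ∞ ∧ ∀ (V : EE → ℝ≥0∞), Measurable V → ∀ (W : EE → ℝ) (K0 : ℝ≥0∞),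
      (∀ x, ‖W x‖ₑ ≤ K0 * ∫⁻ s in Set.Ioo (0:ℝ) 1, hh V s x) →
      eLpNorm W (ENNReal.ofReal r')⁻¹ volume ≤ K0 * C * (∫⁻ y, V y ^ (1/r)) ^ r := by
  have hp : 1 ≤ 1 / r := by rw [le_div_iff₀ hr]; linarith
  set c := volume (Metric.ball (0 : EE) 1) with hc
  have hctop : c ≠ ∞ := measure_ball_lt_top.ne
  set c1 := (c ^ (1/r - 1)) ^ r with hc1
  have hc1top : c1 ≠ ∞ := ENNReal.rpow_ne_top_of_nonneg hr.le (ENNReal.rpow_ne_top_of_nonneg (by linarith) hctop)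
  set J := ∫⁻ s in Set.Ioo (0:ℝ) 1, ENNReal.ofReal s ^ (-(d * (r - r')) : ℝ) with hJ
  have hJtop : J ≠ ∞ := kernel_int hd
  rcases hr'.eq_or_lt with h0 | hpos
  · subst h0
    refine ⟨J * c1, ENNReal.mul_ne_top hJtop hc1top, ?_⟩
    intro V hV W K0 hW
    simp only [ENNReal.ofReal_zero, ENNReal.inv_zero, eLpNorm_exponent_top]
    refine eLpNormEssSup_le_of_ae_enorm_bound (Filter.Eventually.of_forall fun x => ?_)
    refine (hW x).trans ?_
    rw [mul_assoc, mul_assoc]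
    gcongr
    calc ∫⁻ s in Set.Ioo (0:ℝ) 1, hh V s x 
        ≤ ∫⁻ s in Set.Ioo (0:ℝ) 1, ENNReal.ofReal s ^ (-(d * (r - 0)) : ℝ) * (c1 * (∫⁻ y, V y ^ (1/r)) ^ r) := by
          refine setLIntegral_mono (by fun_prop) fun s hs => ?_
          refine (hh_sup hV hr hr1 hs.1 x).trans (le_of_eq ?_)
          rw [sub_zero]; ring
      _ = _ := by
          rw [lintegral_mul_const _ (by fun_prop)]
  · set q := 1 / r' with hq
    have hqp : 1 / r ≤ q := one_div_le_one_div_of_le hpos hrr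
    have hq0 : 0 < q := by positivity
    set c2 := c1 ^ (q - 1/r) * c ^ (1/r) with hc2
    refine ⟨J * c2 ^ (1/q), ?_, ?_⟩
    · refine ENNReal.mul_ne_top hJtop (ENNReal.rpow_ne_top_of_nonneg (by positivity)
        (ENNReal.mul_ne_top (ENNReal.rpow_ne_top_of_nonneg (by linarith) hc1top)
          (ENNReal.rpow_ne_top_of_nonneg (by positivity) hctop)))
    intro V hV W K0 hW
    set N := (∫⁻ y, V y ^ (1/r)) ^ r with hN
    set β : ℝ := d * (r - r') with hβ
    have hqinv : (ENNReal.ofReal r')⁻¹ = ENNReal.ofReal q := by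
      rw [hq, one_div, ENNReal.ofReal_inv_of_pos hpos]
    have hNp : N ^ (1/r) = ∫⁻ y, V y ^ (1/r) := by
      rw [hN, ← ENNReal.rpow_mul, mul_one_div_cancel hr.ne', ENNReal.rpow_one]
    -- L^q bound for each s
    have key : ∀ s ∈ Set.Ioo (0:ℝ) 1, ∫⁻ x, hh V s x ^ q ≤ 
        ENNReal.ofReal s ^ (-(β * q)) * (c2 * N ^ q) := by
      intro s hs
      have hms : Measurable (hh V s) := meas_hh_s hV s
      calc ∫⁻ x, hh V s x ^ q 
          ≤ ∫⁻ x, (c1 * ENNReal.ofReal s ^ (-(d * r : ℝ)) * N) ^ (q - 1/r) * 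
              (c ^ (1/r - 1) * hh (fun y => V y ^ (1/r)) s x) := by
            refine lintegral_mono fun x => ?_
            have : hh V s x ^ q = hh V s x ^ (q - 1/r) * hh V s x ^ (1/r) := by
              rw [← ENNReal.rpow_add_of_nonneg _ _ (by linarith) (by positivity)]; congr 1; ring
            rw [this]
            refine mul_le_mul' (ENNReal.rpow_le_rpow (hh_sup hV hr hr1 hs.1 x) (by linarith)) 
              (hh_pow_le hV hp s x)
        _ = (c1 * ENNReal.ofReal s ^ (-(d * r : ℝ)) * N) ^ (q - 1/r) * 
              (c ^ (1/r - 1) * (c * N ^ (1/r))) := by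
            have hm2 : Measurable (hh (fun y => V y ^ (1/r)) s) := 
              meas_hh_s (hV.pow_const (1/r)) s
            rw [lintegral_const_mul _ (by fun_prop), lintegral_const_mul _ hm2, 
              int_hh (hV.pow_const _), hNp]
        _ = _ := by
            have e1 : c ^ (1/r - 1) * c = c ^ (1/r) := by
              nth_rewrite 2 [← ENNReal.rpow_one c]
              rw [← ENNReal.rpow_add_of_nonneg _ _ (by linarith) (by norm_num)]; congr 1; ring
            have e2 : N ^ (q - 1/r) * N ^ (1/r) = N ^ q := by
              rw [← ENNReal.rpow_add_of_nonneg _ _ (by linarith) (by positivity)]; congr 1; ring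
            have e3 : -(d * r : ℝ) * (q - 1/r) = -(β * q) := by
              rw [hβ, hq]; field_simp
            rw [ENNReal.mul_rpow_of_nonneg _ _ (by linarith), 
              ENNReal.mul_rpow_of_nonneg _ _ (by linarith), ← ENNReal.rpow_mul (ENNReal.ofReal s), e3, ← e2, hc2, ← e1]
            ring
    have hW2 : ∀ x, ‖W x‖ₑ ^ q ≤ K0 ^ q * (J ^ (q-1) * 
        ∫⁻ s in Set.Ioo (0:ℝ) 1, ENNReal.ofReal s ^ (-β) * (ENNReal.ofReal s ^ β * hh V s x) ^ q) := by
      intro x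
      refine (ENNReal.rpow_le_rpow (hW x) hq0.le).trans ?_
      rw [ENNReal.mul_rpow_of_nonneg _ _ hq0.le]
      gcongr
      have hmx : Measurable (fun s => hh V s x) := meas_hh_x hV x
      have := jensenW (volume.restrict (Set.Ioo (0:ℝ) 1)) (K := fun s => ENNReal.ofReal s ^ (-β))
        (f := fun s => ENNReal.ofReal s ^ β * hh V s x) (by fun_prop) (by fun_prop) (hp.trans hqp)
      refine le_trans (le_of_eq ?_) this
      congr 1
      refine setLIntegral_congr_fun measurableSet_Ioo fun s hs => ?_
      have hs0 : ENNReal.ofReal s ≠ 0 := by simpa using hs.1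
      simp only [← mul_assoc]
      rw [← ENNReal.rpow_add _ _ hs0 ENNReal.ofReal_ne_top]
      simp
    have hint : ∫⁻ x, ‖W x‖ₑ ^ q ≤ K0 ^ q * (J ^ q * (c2 * N ^ q)) := by
      calc ∫⁻ x, ‖W x‖ₑ ^ q ≤ ∫⁻ x, K0 ^ q * (J ^ (q-1) * 
        ∫⁻ s in Set.Ioo (0:ℝ) 1, ENNReal.ofReal s ^ (-β) * (ENNReal.ofReal s ^ β * hh V s x) ^ q) := 
            lintegral_mono hW2
        _ = K0 ^ q * (J ^ (q-1) * ∫⁻ s in Set.Ioo (0:ℝ) 1, ∫⁻ x,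
              ENNReal.ofReal s ^ (-β) * (ENNReal.ofReal s ^ β * hh V s x) ^ q) := by
            have hm : Measurable (fun y : EE × ℝ => 
              ENNReal.ofReal y.2 ^ (-β) * (ENNReal.ofReal y.2 ^ β * hh V y.2 y.1) ^ q) := by
              have : Measurable (fun y : EE × ℝ => hh V y.2 y.1) := (meas_hh hV).comp measurable_swap
              fun_prop
            have hm' := hm.lintegral_prod_right' (ν := volume.restrict (Set.Ioo (0:ℝ) 1))
            rw [lintegral_const_mul _ (hm'.const_mul _), lintegral_const_mul _ hm', 
              lintegral_lintegral_swap hm.aemeasurable]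
        _ ≤ K0 ^ q * (J ^ (q-1) * ∫⁻ s in Set.Ioo (0:ℝ) 1, 
              ENNReal.ofReal s ^ (-β) * (c2 * N ^ q)) := by
            refine mul_le_mul' le_rfl (mul_le_mul' le_rfl ?_)
            refine setLIntegral_mono' measurableSet_Ioo fun s hs => ?_
            have hms : Measurable (hh V s) := meas_hh_s hV s
            have hs0 : ENNReal.ofReal s ≠ 0 := by simpa using hs.1
            rw [lintegral_const_mul _ ((hms.const_mul _).pow_const _)]
            gcongr
            simp_rw [ENNReal.mul_rpow_of_nonneg _ _ hq0.le]
            rw [lintegral_const_mul _ (by fun_prop)]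
            calc _ ≤ (ENNReal.ofReal s ^ β) ^ q * (ENNReal.ofReal s ^ (-(β * q)) * (c2 * N ^ q)) := by
                  gcongr; exact key s hs
              _ = _ := by
                  rw [← mul_assoc, ← ENNReal.rpow_mul, ← ENNReal.rpow_add _ _ hs0 ENNReal.ofReal_ne_top]
                  simp
        _ = _ := by
            rw [lintegral_mul_const _ (by fun_prop)]
            have : J ^ q = J ^ (q-1) * J := by
              nth_rewrite 3 [← ENNReal.rpow_one J]
              rw [← ENNReal.rpow_add_of_nonneg _ _ (by linarith) (by norm_num)]; congr 1; ring
            rw [this, ← hJ]; ring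
    rw [hqinv, eLpNorm_eq_lintegral_rpow_enorm_toReal (by simpa using hq0) ENNReal.ofReal_ne_top,
      ENNReal.toReal_ofReal hq0.le]
    refine (ENNReal.rpow_le_rpow hint (by positivity)).trans (le_of_eq ?_)
    have e (X : ℝ≥0∞) : (X ^ q) ^ (1/q) = X := by
      rw [← ENNReal.rpow_mul, mul_one_div_cancel hq0.ne', ENNReal.rpow_one]
    have hq1 : 0 ≤ 1/q := by positivity
    rw [ENNReal.mul_rpow_of_nonneg _ _ hq1, ENNReal.mul_rpow_of_nonneg _ _ hq1, 
      ENNReal.mul_rpow_of_nonneg _ _ hq1, e, e, e]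
    ring

end WS

namespace WS

variable {d : ℕ}

local notation "EE" => EuclideanSpace ℝ (Fin d)

lemma jb_pos (x : EE) : 0 < jb x := Real.sqrt_pos.2 (by positivity)

lemma one_le_jb (x : EE) : 1 ≤ jb x := by
  unfold jb
  rw [Real.one_le_sqrt]
  nlinarith [sq_nonneg ‖x‖]

lemma cont_jb (δ : ℝ) : Continuous (fun x : EE => jb x ^ δ) := by
  have : Continuous (fun x : EE => jb x) := by unfold jb; fun_prop
  exact this.rpow_const fun x => Or.inl (jb_pos x).ne'

lemma jb_shift {x y : EE} (h : ‖x - y‖ ≤ 1) : jb x ≤ 2 * jb y := by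
  unfold jb
  rw [show (2:ℝ) * √(1 + ‖y‖^2) = √(4 * (1 + ‖y‖^2)) by
    rw [Real.sqrt_mul (by norm_num), show (4:ℝ) = 2^2 by norm_num, Real.sqrt_sq (by norm_num)]]
  apply Real.sqrt_le_sqrt
  have h1 : ‖x‖ ≤ ‖y‖ + 1 := by
    have := norm_sub_norm_le x y
    linarith
  nlinarith [norm_nonneg x, norm_nonneg y, sq_nonneg (‖y‖ - 1)]

lemma jb_shift_pow {δ : ℝ} (hδ : 0 ≤ δ) {x y : EE} (h : ‖x - y‖ ≤ 1) :
    jb x ^ δ ≤ 2 ^ δ * jb y ^ δ := by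
  rw [← Real.mul_rpow (by norm_num) (jb_pos y).le]
  exact Real.rpow_le_rpow (jb_pos x).le (jb_shift h) hδ

/-- weighted first-order density -/
noncomputable def VV (δ : ℝ) (u : EE → ℝ) (y : EE) : ℝ :=
  ‖jb y ^ δ • u y‖ + ∑ i, ‖jb y ^ δ • pderiv' i u y‖

lemma fderiv_apply_le (u : EE → ℝ) (y z : EE) (hz : ‖z‖ ≤ 1) :
    ‖fderiv ℝ u y z‖ ≤ ∑ i, ‖pderiv' i u y‖ := by
  have hz2 : z = ∑ i, z i • (EuclideanSpace.single i (1:ℝ) : EE) := by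
    have := (EuclideanSpace.basisFun (Fin d) ℝ).sum_repr z
    simpa using this.symm
  conv_lhs => rw [hz2]
  rw [map_sum]
  refine (norm_sum_le _ _).trans (Finset.sum_le_sum fun i _ => ?_)
  rw [map_smul, norm_smul]
  have : ‖z i‖ ≤ 1 := (PiLp.norm_apply_le z i).trans hz
  exact mul_le_of_le_one_left (norm_nonneg _) this

lemma cont_pderiv {u : EE → ℝ} (hu : ContDiff ℝ 1 u) (i : Fin d) : Continuous (pderiv' i u) := by
  have := hu.continuous_fderiv one_ne_zero
  unfold pderiv'
  fun_prop

lemma cont_VV {δ : ℝ} {u : EE → ℝ} (hu : ContDiff ℝ 1 u) : Continuous (VV δ u) := by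
  have h1 := cont_jb (d := d) δ
  have h2 := hu.continuous
  have h3 := fun i => cont_pderiv hu i
  unfold VV
  fun_prop

lemma pointwise {δ : ℝ} (hδ : 0 ≤ δ) {u : EE → ℝ} (hu : ContDiff ℝ 1 u) (x z : EE) (hz : ‖z‖ ≤ 1) :
    ‖jb x ^ δ • u x‖ₑ ≤ ENNReal.ofReal (2 ^ δ) * ∫⁻ s in Set.Ioo (0:ℝ) 1, ‖VV δ u (x + s • z)‖ₑ := by
  set φ' : ℝ → ℝ := fun s => -(u (x + s • z)) + (1 - s) * fderiv ℝ u (x + s • z) z with hφ'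
  have hder : ∀ s : ℝ, HasDerivAt (fun s : ℝ => (1 - s) * u (x + s • z)) (φ' s) s := by
    intro s
    have h1 : HasDerivAt (fun s : ℝ => x + s • z) z s := by
      simpa using ((hasDerivAt_id s).smul_const z).const_add x
    have h2 := ((hu.differentiable one_ne_zero (x + s • z)).hasFDerivAt).comp_hasDerivAt s h1
    have h3 := ((hasDerivAt_id s).const_sub 1).mul h2
    refine h3.congr_deriv ?_
    simp [hφ']
  have hcont : Continuous φ' := by
    have h1 := hu.continuous_fderiv one_ne_zero
    have h2 := hu.continuous
    rw [hφ']
    fun_prop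
  have hftc := intervalIntegral.integral_eq_sub_of_hasDerivAt (a := 0) (b := 1) (fun s _ => hder s)
    (hcont.intervalIntegrable _ _)
  simp only [sub_self, zero_mul, sub_zero, zero_smul, add_zero, one_mul, zero_sub] at hftc
  have h1 : ‖u x‖ₑ ≤ ∫⁻ s in Set.Ioo (0:ℝ) 1, ‖φ' s‖ₑ := by
    rw [← enorm_neg, ← hftc, intervalIntegral.integral_of_le zero_le_one]
    rw [restrict_Ioo_eq_restrict_Ioc]
    exact enorm_integral_le_lintegral_enorm _
  rw [enorm_smul]
  calc ‖jb x ^ δ‖ₑ * ‖u x‖ₑ ≤ ‖jb x ^ δ‖ₑ * ∫⁻ s in Set.Ioo (0:ℝ) 1, ‖φ' s‖ₑ := by gcongr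
    _ = ∫⁻ s in Set.Ioo (0:ℝ) 1, ‖jb x ^ δ‖ₑ * ‖φ' s‖ₑ := by
        rw [lintegral_const_mul _ (by fun_prop)]
    _ ≤ ∫⁻ s in Set.Ioo (0:ℝ) 1, ENNReal.ofReal (2 ^ δ) * ‖VV δ u (x + s • z)‖ₑ := by
        refine lintegral_mono_ae ?_
        filter_upwards [ae_restrict_mem measurableSet_Ioo] with s hs
        rw [← enorm_mul, ← Real.enorm_of_nonneg (by positivity), ← enorm_mul]
        rw [enorm_le_iff_norm_le]
        have hw : jb x ^ δ ≤ 2 ^ δ * jb (x + s • z) ^ δ := by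
          apply jb_shift_pow hδ
          simp only [sub_add_cancel_left, norm_neg, norm_smul, Real.norm_eq_abs, abs_of_pos hs.1]
          nlinarith [hs.1, hs.2, norm_nonneg z]
        have hjp : ∀ y : EE, 0 < jb y ^ δ := fun y => Real.rpow_pos_of_pos (jb_pos y) _
        have hφb : ‖φ' s‖ ≤ ‖u (x + s • z)‖ + ∑ i, ‖pderiv' i u (x + s • z)‖ := by
          rw [hφ']
          refine (norm_add_le _ _).trans ?_
          rw [norm_neg, norm_mul]
          gcongr
          refine le_trans ?_ (fderiv_apply_le u (x + s • z) z hz)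
          apply mul_le_of_le_one_left (norm_nonneg _)
          rw [Real.norm_eq_abs, abs_le]; constructor <;> linarith [hs.1, hs.2]
        have hV : VV δ u (x + s • z) = jb (x + s • z) ^ δ * 
            (‖u (x + s • z)‖ + ∑ i, ‖pderiv' i u (x + s • z)‖) := by
          unfold VV
          simp only [norm_smul, Real.norm_of_nonneg (hjp _).le, mul_add, Finset.mul_sum]
        rw [norm_mul, norm_mul, hV, norm_mul, Real.norm_of_nonneg (hjp _).le,
          Real.norm_of_nonneg (hjp _).le, Real.norm_of_nonneg (by positivity : (0:ℝ) ≤ 2 ^ δ), ← mul_assoc]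
        refine mul_le_mul hw (hφb.trans (le_abs_self _)) (norm_nonneg _) ?_
        have := hjp (x + s • z)
        positivity
    _ = _ := by
        have : Continuous (fun s : ℝ => VV δ u (x + s • z)) := (cont_VV hu).comp (by fun_prop)
        rw [lintegral_const_mul _ this.measurable.enorm]

lemma step (δ : ℝ) (hδ : 0 ≤ δ) (r r' : ℝ) (hr : 0 < r) (hr1 : r ≤ 1) (hr' : 0 ≤ r') (hrr : r' ≤ r)
    (hd : d * (r - r') < 1) :
    ∃ C : ℝ≥0∞, C ≠ ∞ ∧ ∀ (u : EE → ℝ), ContDiff ℝ 1 u → ∀ B : ℝ≥0∞,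
      eLpNorm (fun x => jb x ^ δ • u x) (ENNReal.ofReal r)⁻¹ volume ≤ B →
      (∀ i, eLpNorm (fun x => jb x ^ δ • pderiv' i u x) (ENNReal.ofReal r)⁻¹ volume ≤ B) →
      eLpNorm (fun x => jb x ^ δ • u x) (ENNReal.ofReal r')⁻¹ volume ≤ C * B := by
  obtain ⟨C, hC, hA⟩ := lemA (d := d) r r' hr hr1 hr' hrr hd
  set c := volume (Metric.ball (0 : EE) 1) with hc
  have hctop : c ≠ ∞ := measure_ball_lt_top.ne
  have hc0 : c ≠ 0 := (Metric.measure_ball_pos _ _ one_pos).ne'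
  refine ⟨(c⁻¹ * ENNReal.ofReal (2 ^ δ)) * C * (1 + d), ?_, ?_⟩
  · refine ENNReal.mul_ne_top (ENNReal.mul_ne_top (ENNReal.mul_ne_top (by simpa using hc0) 
      ENNReal.ofReal_ne_top) hC) (by finiteness)
  intro u hu B hB0 hB
  have hVc := cont_VV (δ := δ) hu
  have hVm : Measurable (fun y => ‖VV δ u y‖ₑ) := hVc.measurable.enorm
  have hpt : ∀ x, ‖jb x ^ δ • u x‖ₑ ≤ (c⁻¹ * ENNReal.ofReal (2 ^ δ)) * 
      ∫⁻ s in Set.Ioo (0:ℝ) 1, hh (fun y => ‖VV δ u y‖ₑ) s x := by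
    intro x
    have h1 : ‖jb x ^ δ • u x‖ₑ * c ≤ ∫⁻ z in Metric.ball (0 : EE) 1, 
        ENNReal.ofReal (2 ^ δ) * ∫⁻ s in Set.Ioo (0:ℝ) 1, ‖VV δ u (x + s • z)‖ₑ := by
      rw [hc, ← setLIntegral_const]
      refine lintegral_mono_ae ?_
      filter_upwards [ae_restrict_mem Metric.isOpen_ball.measurableSet] with z hz
      exact pointwise hδ hu x z ((mem_ball_zero_iff.1 hz).le)
    have hm : Measurable (fun y : EE × ℝ => ‖VV δ u (x + y.2 • y.1)‖ₑ) := by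
      refine hVm.comp (by fun_prop)
    rw [lintegral_const_mul _ hm.lintegral_prod_right', lintegral_lintegral_swap hm.aemeasurable] at h1
    rw [mul_assoc]
    rw [← ENNReal.le_div_iff_mul_le (Or.inl hc0) (Or.inl hctop), ENNReal.div_eq_inv_mul] at h1
    exact h1
  have h2 := hA _ hVm _ _ hpt
  have hq1 : 1 ≤ (ENNReal.ofReal r)⁻¹ := by
    rw [ENNReal.one_le_inv]; simpa using hr1
  have h3 : (∫⁻ y, ‖VV δ u y‖ₑ ^ (1/r)) ^ r = eLpNorm (VV δ u) (ENNReal.ofReal r)⁻¹ volume := by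
    rw [← ENNReal.ofReal_inv_of_pos hr, eLpNorm_eq_lintegral_rpow_enorm_toReal (by simpa using hr) ENNReal.ofReal_ne_top,
      ENNReal.toReal_ofReal (by positivity)]
    simp
  have h4 : eLpNorm (VV δ u) (ENNReal.ofReal r)⁻¹ volume ≤ (1 + d) * B := by
    have hcu : Continuous (fun x : EE => ‖jb x ^ δ • u x‖) := 
      ((cont_jb δ).smul hu.continuous).norm
    have hci : ∀ i, Continuous (fun x : EE => ‖jb x ^ δ • pderiv' i u x‖) := fun i =>
      ((cont_jb δ).smul (cont_pderiv hu i)).norm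
    have e : VV δ u = (fun x : EE => ‖jb x ^ δ • u x‖) + ∑ i, (fun x : EE => ‖jb x ^ δ • pderiv' i u x‖) := by
      ext y; simp only [VV, Pi.add_apply, Finset.sum_apply]
    rw [e]
    refine (eLpNorm_add_le hcu.aestronglyMeasurable 
      (Finset.aestronglyMeasurable_sum _ fun i _ => (hci i).aestronglyMeasurable) hq1).trans ?_
    rw [add_mul, one_mul]
    refine add_le_add ?_ ?_
    · rw [eLpNorm_norm]; exact hB0
    · refine (eLpNorm_sum_le (fun i _ => (hci i).aestronglyMeasurable) hq1).trans ?_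
      refine (Finset.sum_le_sum (g := fun _ => B) fun i _ => ?_).trans ?_
      · rw [eLpNorm_norm]; exact hB i
      · simp
  rw [h3] at h2
  refine h2.trans ?_
  rw [mul_assoc _ (1 + (d : ℝ≥0∞)) B]
  gcongr

end WS

namespace WS

variable {d : ℕ}

local notation "EE" => EuclideanSpace ℝ (Fin d)

/-- iterated derivative along a word -/
noncomputable def dW (v : List (Fin d)) (f : EE → ℝ) : EE → ℝ := v.foldr (fun i g => pderiv' i g) f

lemma dW_append (v w : List (Fin d)) (f : EE → ℝ) : dW (v ++ w) f = dW v (dW w f) := by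
  simp [dW]

lemma sm_pderiv {f : EE → ℝ} (hf : ContDiff ℝ (⊤ : ℕ∞) f) (i : Fin d) :
    ContDiff ℝ (⊤ : ℕ∞) (pderiv' i f) := by
  unfold pderiv'
  exact (hf.fderiv_right (m := (⊤ : ℕ∞)) (by simp)).clm_apply contDiff_const

lemma sm_dW {f : EE → ℝ} (hf : ContDiff ℝ (⊤ : ℕ∞) f) (v : List (Fin d)) :
    ContDiff ℝ (⊤ : ℕ∞) (dW v f) := by
  induction v with
  | nil => exact hf
  | cons i v ih => exact sm_pderiv ih i

lemma cs_pderiv {f : EE → ℝ} (hf : HasCompactSupport f) (i : Fin d) :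
    HasCompactSupport (pderiv' i f) := by
  unfold pderiv'
  exact hf.fderiv_apply ℝ _

lemma cs_dW {f : EE → ℝ} (hf : HasCompactSupport f) (v : List (Fin d)) :
    HasCompactSupport (dW v f) := by
  induction v with
  | nil => exact hf
  | cons i v ih => exact cs_pderiv ih i

lemma pderiv_comm {f : EE → ℝ} (hf : ContDiff ℝ (⊤ : ℕ∞) f) (i j : Fin d) :
    pderiv' i (pderiv' j f) = pderiv' j (pderiv' i f) := by
  ext x
  have hd : DifferentiableAt ℝ (fderiv ℝ f) x :=
    ((hf.fderiv_right (m := (⊤ : ℕ∞)) (by simp)).differentiable (by simp)) x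
  have hs : IsSymmSndFDerivAt ℝ f x := hf.contDiffAt.isSymmSndFDerivAt (by rw [minSmoothness_of_isRCLikeNormedField]; exact WithTop.coe_le_coe.2 (le_top (a := (2 : ℕ∞))))
  have e : ∀ a b : EE, fderiv ℝ (fun y => fderiv ℝ f y a) x b = fderiv ℝ (fderiv ℝ f) x b a := by
    intro a b
    rw [fderiv_clm_apply hd (by fun_prop)]
    simp
  unfold pderiv'
  rw [e, e]
  exact hs _ _

lemma dW_perm {f : EE → ℝ} (hf : ContDiff ℝ (⊤ : ℕ∞) f) {v w : List (Fin d)} (h : v.Perm w) :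
    dW v f = dW w f := by
  induction h with
  | nil => rfl
  | cons i _ ih => simp only [dW, List.foldr_cons] at ih ⊢; rw [ih]
  | swap i j l =>
    exact pderiv_comm (sm_dW hf l) j i
  | trans _ _ h1 h2 => rw [h1, h2]

lemma dW_replicate (n : ℕ) (i : Fin d) (g : EE → ℝ) :
    dW (List.replicate n i) g = (pderiv' i)^[n] g := by
  induction n with
  | zero => rfl
  | succ n ih => 
    rw [Function.iterate_succ_apply', ← ih]; rfl

/-- word of a multi-index -/
def wd (α : Fin d → ℕ) : List (Fin d) := (List.finRange d).flatMap fun i => List.replicate (α i) i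

lemma mderiv_eq (α : Fin d → ℕ) (f : EE → ℝ) : mderiv α f = dW (wd α) f := by
  unfold mderiv wd
  induction List.finRange d with
  | nil => rfl
  | cons i l ih =>
    rw [List.foldr_cons, ih, List.flatMap_cons, dW_append, dW_replicate]

lemma length_wd (α : Fin d → ℕ) : (wd α).length = ∑ i, α i := by
  unfold wd
  rw [List.length_flatMap]
  simp [Fin.sum_univ_def]

lemma count_wd (α : Fin d → ℕ) (j : Fin d) : (wd α).count j = α j := by
  unfold wd
  rw [List.count_flatMap]
  simp only [Function.comp_def, List.count_replicate]
  rw [← Fin.sum_univ_def]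
  simp

lemma perm_wd (v : List (Fin d)) : v.Perm (wd fun i => v.count i) := by
  rw [List.perm_iff_count]
  intro a
  rw [count_wd]

/-- extended weighted norm -/
noncomputable def eN (m : ℕ) (q : ℝ≥0∞) (δ : ℝ) (f : EE → ℝ) : ℝ≥0∞ :=
  ∑ α ∈ Finset.univ.filter (fun α : Fin d → Fin (m + 1) => ∑ i, (α i : ℕ) ≤ m),
    eLpNorm (fun x => jb x ^ δ • mderiv (fun i => (α i : ℕ)) f x) q volume

lemma dW_le_eN {m : ℕ} {q : ℝ≥0∞} {δ : ℝ} {f : EE → ℝ} (hf : ContDiff ℝ (⊤ : ℕ∞) f)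
    (v : List (Fin d)) (hv : v.length ≤ m) :
    eLpNorm (fun x => jb x ^ δ • dW v f x) q volume ≤ eN m q δ f := by
  have hc : ∀ i, v.count i < m + 1 := fun i => by
    have := List.count_le_length (a := i) (l := v); omega
  have hsum : ∑ i, v.count i ≤ m := by
    rw [← length_wd fun i => v.count i, ← (perm_wd v).length_eq]; exact hv
  have h := Finset.single_le_sum 
    (f := fun α : Fin d → Fin (m + 1) => eLpNorm (fun x => jb x ^ δ • mderiv (fun i => (α i : ℕ)) f x) q volume)
    (s := Finset.univ.filter (fun α : Fin d → Fin (m + 1) => ∑ i, (α i : ℕ) ≤ m))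
    (fun _ _ => zero_le) (a := fun i => ⟨v.count i, hc i⟩) (by simpa using hsum)
  refine le_trans (le_of_eq ?_) h
  simp only [mderiv_eq]
  rw [dW_perm hf (perm_wd v)]

lemma memLp_dW {q : ℝ≥0∞} {δ : ℝ} {f : EE → ℝ} (hf : ContDiff ℝ (⊤ : ℕ∞) f) (hc : HasCompactSupport f)
    (v : List (Fin d)) : eLpNorm (fun x => jb x ^ δ • dW v f x) q volume ≠ ∞ := by
  have h1 : Continuous (fun x => jb x ^ δ • dW v f x) := (cont_jb δ).smul (sm_dW hf v).continuous
  have h2 : HasCompactSupport (fun x => jb x ^ δ • dW v f x) :=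
    (cs_dW hc v).smul_left (f := fun x : EE => jb x ^ δ)
  exact (h1.memLp_of_hasCompactSupport h2).2.ne

lemma eN_ne_top {m : ℕ} {q : ℝ≥0∞} {δ : ℝ} {f : EE → ℝ} (hf : ContDiff ℝ (⊤ : ℕ∞) f) 
    (hc : HasCompactSupport f) : eN m q δ f ≠ ∞ := by
  unfold eN
  refine ENNReal.sum_ne_top.2 fun α _ => ?_
  rw [mderiv_eq]
  exact memLp_dW hf hc _

lemma Hnorm_eq {m : ℕ} {p δ : ℝ} {f : EE → ℝ} (hf : ContDiff ℝ (⊤ : ℕ∞) f) 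
    (hc : HasCompactSupport f) : Hnorm d m p δ f = (eN m (ENNReal.ofReal p) δ f).toReal := by
  unfold eN
  rw [ENNReal.toReal_sum]
  · rfl
  · intro α _
    rw [mderiv_eq]
    exact memLp_dW hf hc _

/-- splittings of a word -/
def spl : List (Fin d) → List (List (Fin d) × List (Fin d))
  | [] => [([], [])]
  | i :: v => (spl v).map (fun w => (i :: w.1, w.2)) ++ (spl v).map (fun w => (w.1, i :: w.2))

lemma spl_len (v : List (Fin d)) : ∀ w ∈ spl v, w.1.length + w.2.length = v.length := by
  induction v with
  | nil => simp [spl]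
  | cons i v ih =>
    intro w hw
    simp only [spl, List.mem_append, List.mem_map] at hw
    rcases hw with ⟨a, ha, rfl⟩ | ⟨a, ha, rfl⟩ <;> have := ih a ha <;> simp <;> omega

lemma pderiv_add {f g : EE → ℝ} (hf : ContDiff ℝ (⊤ : ℕ∞) f) (hg : ContDiff ℝ (⊤ : ℕ∞) g) (i : Fin d) :
    pderiv' i (fun x => f x + g x) = fun x => pderiv' i f x + pderiv' i g x := by
  ext x
  unfold pderiv'
  rw [fderiv_fun_add (hf.differentiable (by simp) x) (hg.differentiable (by simp) x)]
  rfl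

lemma pderiv_mul {f g : EE → ℝ} (hf : ContDiff ℝ (⊤ : ℕ∞) f) (hg : ContDiff ℝ (⊤ : ℕ∞) g) (i : Fin d) :
    pderiv' i (fun x => f x * g x) = fun x => pderiv' i f x * g x + f x * pderiv' i g x := by
  ext x
  unfold pderiv'
  rw [fderiv_fun_mul (hf.differentiable (by simp) x) (hg.differentiable (by simp) x)]
  simp; ring

/-- sum over a list of splittings -/
noncomputable def lsum (f g : EE → ℝ) (L : List (List (Fin d) × List (Fin d))) (x : EE) : ℝ :=
  (L.map fun w => dW w.1 f x * dW w.2 g x).sum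

lemma sm_lsum {f g : EE → ℝ} (hf : ContDiff ℝ (⊤ : ℕ∞) f) (hg : ContDiff ℝ (⊤ : ℕ∞) g)
    (L : List (List (Fin d) × List (Fin d))) : ContDiff ℝ (⊤ : ℕ∞) (lsum f g L) := by
  induction L with
  | nil => exact contDiff_const
  | cons w L ih =>
    have : lsum f g (w :: L) = fun x => dW w.1 f x * dW w.2 g x + lsum f g L x := by
      ext x; simp [lsum]
    rw [this]
    exact ((sm_dW hf _).mul (sm_dW hg _)).add ih

lemma pderiv_lsum {f g : EE → ℝ} (hf : ContDiff ℝ (⊤ : ℕ∞) f) (hg : ContDiff ℝ (⊤ : ℕ∞) g)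
    (i : Fin d) (L : List (List (Fin d) × List (Fin d))) : 
    pderiv' i (lsum f g L) = lsum f g (L.map (fun w => (i :: w.1, w.2)) ++ L.map (fun w => (w.1, i :: w.2))) := by
  induction L with
  | nil => 
    ext x
    have : lsum f g [] = fun _ => (0:ℝ) := rfl
    simp [this, pderiv']
  | cons w L ih =>
    have : lsum f g (w :: L) = fun x => dW w.1 f x * dW w.2 g x + lsum f g L x := by
      ext x; simp [lsum]
    rw [this, pderiv_add ((sm_dW hf _).mul (sm_dW hg _)) (sm_lsum hf hg L), 
      pderiv_mul (sm_dW hf _) (sm_dW hg _), ih]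
    ext x
    simp only [lsum, List.map_cons, List.map_append, List.cons_append, List.sum_cons, List.sum_append]
    simp only [dW, List.foldr_cons]
    ring

lemma leibniz {f g : EE → ℝ} (hf : ContDiff ℝ (⊤ : ℕ∞) f) (hg : ContDiff ℝ (⊤ : ℕ∞) g)
    (v : List (Fin d)) : dW v (fun x => f x * g x) = lsum f g (spl v) := by
  induction v with
  | nil => ext x; simp [dW, lsum, spl]
  | cons i v ih =>
    rw [spl, ← pderiv_lsum hf hg, ← ih]; rfl

lemma sobolev (δ : ℝ) (hδ : 0 ≤ δ) (r t : ℝ) (hr1 : r ≤ 1) (ht : 0 < t) (hdt : d * t < 1) (k : ℕ)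
    (hk : k * t ≤ r) :
    ∃ C : ℝ≥0∞, C ≠ ∞ ∧ ∀ (u : EE → ℝ), ContDiff ℝ (⊤ : ℕ∞) u → ∀ B : ℝ≥0∞,
      (∀ v : List (Fin d), v.length ≤ k → 
        eLpNorm (fun x => jb x ^ δ • dW v u x) (ENNReal.ofReal r)⁻¹ volume ≤ B) →
      eLpNorm (fun x => jb x ^ δ • u x) (ENNReal.ofReal (r - k * t))⁻¹ volume ≤ C * B := by
  induction k with
  | zero =>
    refine ⟨1, by simp, fun u hu B hB => ?_⟩
    simpa [dW] using hB [] (by simp)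
  | succ k ih =>
    push_cast at hk ⊢
    obtain ⟨C, hC, h⟩ := ih (by nlinarith)
    obtain ⟨C', hC', h'⟩ := step (d := d) δ hδ (r - k * t) (r - (k + 1) * t) (by nlinarith) 
      (by have : 0 ≤ k * t := by positivity
          linarith) (by linarith) (by nlinarith) (by ring_nf; linarith)
    refine ⟨C' * C, ENNReal.mul_ne_top hC' hC, fun u hu B hB => ?_⟩
    rw [mul_assoc]
    refine h' u (hu.of_le (by exact_mod_cast le_top)) _ (h u hu B fun v hv => hB v (by omega)) fun i => ?_
    refine h _ (sm_pderiv hu i) B fun v hv => ?_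
    have := hB (v ++ [i]) (by simpa using hv)
    rw [dW_append] at this
    exact this

lemma prod_est (p δ : ℝ) (hp : 1 ≤ p) (m : ℕ) (hd : 1 ≤ d) (hm : (d : ℝ) / p < m) (hδ : 0 ≤ δ) 
    (a b : ℕ) (hab : a + b ≤ m) : 
    ∃ C : ℝ≥0∞, C ≠ ∞ ∧ ∀ f g : EE → ℝ, ContDiff ℝ (⊤ : ℕ∞) f → ContDiff ℝ (⊤ : ℕ∞) g →
      ∀ v w : List (Fin d), v.length = a → w.length = b →
      eLpNorm (fun x => jb x ^ δ • (dW v f x * dW w g x)) (ENNReal.ofReal p) volume ≤ 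
        C * (eN m (ENNReal.ofReal p) δ f * eN m (ENNReal.ofReal p) δ g) := by
  have hp0 : 0 < p := by linarith
  have hd0 : (1:ℝ) ≤ d := by exact_mod_cast hd
  have hab' : (a : ℝ) + b ≤ m := by exact_mod_cast hab
  have hm0 : (0:ℝ) < m := lt_of_le_of_lt (by positivity) hm
  set n : ℝ := 2 * m - a - b with hn
  have hnm : (m : ℝ) ≤ n := by rw [hn]; linarith
  have hn0 : 0 < n := by linarith
  set t : ℝ := 1 / (p * n) with ht
  have ht0 : 0 < t := by positivity
  have hdt : d * t < 1 := by
    rw [ht, mul_one_div, div_lt_one (by positivity)]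
    rw [div_lt_iff₀ hp0] at hm
    nlinarith
  have hnt : n * t = 1 / p := by rw [ht]; field_simp
  have hca : ((m - a : ℕ) : ℝ) = m - a := by rw [Nat.cast_sub (by omega)]
  have hcb : ((m - b : ℕ) : ℝ) = m - b := by rw [Nat.cast_sub (by omega)]
  have ham : (0:ℝ) ≤ m - a := by rw [← hca]; positivity
  have hbm : (0:ℝ) ≤ m - b := by rw [← hcb]; positivity
  have hr1 : 1 / p ≤ 1 := by rw [div_le_one hp0]; exact hp
  have hk1 : ((m - a : ℕ) : ℝ) * t ≤ 1 / p := by rw [hca, ← hnt]; gcongr; rw [hn]; linarith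
  have hk2 : ((m - b : ℕ) : ℝ) * t ≤ 1 / p := by rw [hcb, ← hnt]; gcongr; rw [hn]; linarith
  obtain ⟨C1, hC1, h1⟩ := sobolev (d := d) δ hδ (1/p) t hr1 ht0 hdt (m - a) hk1
  obtain ⟨C2, hC2, h2⟩ := sobolev (d := d) δ hδ (1/p) t hr1 ht0 hdt (m - b) hk2
  have hpp : (ENNReal.ofReal (1/p))⁻¹ = ENNReal.ofReal p := by
    rw [one_div, ENNReal.ofReal_inv_of_pos hp0, inv_inv]
  rw [hpp] at h1 h2
  refine ⟨C1 * C2, ENNReal.mul_ne_top hC1 hC2, fun f g hf hg v w hv hw => ?_⟩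
  have e1 := h1 (dW v f) (sm_dW hf v) (eN m (ENNReal.ofReal p) δ f) fun v' hv' => by
    rw [← dW_append]; exact dW_le_eN hf _ (by simp; omega)
  have e2 := h2 (dW w g) (sm_dW hg w) (eN m (ENNReal.ofReal p) δ g) fun v' hv' => by
    rw [← dW_append]; exact dW_le_eN hg _ (by simp; omega)
  set q1 := (ENNReal.ofReal (1 / p - ((m - a : ℕ) : ℝ) * t))⁻¹ with hq1
  set q2 := (ENNReal.ofReal (1 / p - ((m - b : ℕ) : ℝ) * t))⁻¹ with hq2
  have : ENNReal.HolderTriple q1 q2 (ENNReal.ofReal p) := by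
    constructor
    rw [hq1, hq2, inv_inv, inv_inv, ← ENNReal.ofReal_add (by linarith) (by linarith), ← hpp, inv_inv]
    congr 1
    rw [hca, hcb, ← hnt, hn]; ring
  have hA : Continuous (fun x => jb x ^ δ • dW v f x) := (cont_jb δ).smul (sm_dW hf v).continuous
  have hB : Continuous (fun x => jb x ^ δ • dW w g x) := (cont_jb δ).smul (sm_dW hg w).continuous
  have hH := eLpNorm_smul_le_mul_eLpNorm (p := q1) (q := q2) (r := ENNReal.ofReal p) (μ := volume)
    hB.aestronglyMeasurable hA.aestronglyMeasurable
  calc _ ≤ eLpNorm ((fun x => jb x ^ δ • dW v f x) • fun x => jb x ^ δ • dW w g x) (ENNReal.ofReal p) volume := by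
        refine eLpNorm_mono fun x => ?_
        have hj : 1 ≤ jb x ^ δ := Real.one_le_rpow (one_le_jb x) hδ
        simp only [Pi.smul_apply', smul_eq_mul, norm_mul, Real.norm_of_nonneg (zero_le_one.trans hj)]
        nlinarith [mul_nonneg (mul_nonneg (norm_nonneg (dW v f x)) (norm_nonneg (dW w g x))) (mul_nonneg (zero_le_one.trans hj) (sub_nonneg.2 hj))]
    _ ≤ _ := hH.trans (mul_le_mul' e1 e2)
    _ = _ := by ring

lemma lsum_est (p δ : ℝ) (hp : 1 ≤ p) (m : ℕ) (hd : 1 ≤ d) (hm : (d : ℝ) / p < m) (hδ : 0 ≤ δ) 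
    (L : List (List (Fin d) × List (Fin d))) (hL : ∀ w ∈ L, w.1.length + w.2.length ≤ m) : 
    ∃ C : ℝ≥0∞, C ≠ ∞ ∧ ∀ f g : EE → ℝ, ContDiff ℝ (⊤ : ℕ∞) f → ContDiff ℝ (⊤ : ℕ∞) g →
      eLpNorm (fun x => jb x ^ δ • lsum f g L x) (ENNReal.ofReal p) volume ≤ 
        C * (eN m (ENNReal.ofReal p) δ f * eN m (ENNReal.ofReal p) δ g) := by
  induction L with
  | nil => exact ⟨0, by simp, fun f g _ _ => by simp [lsum]⟩
  | cons w L ih =>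
    obtain ⟨C1, hC1, h1⟩ := ih fun w' hw' => hL w' (List.mem_cons_of_mem _ hw')
    obtain ⟨C2, hC2, h2⟩ := prod_est (d := d) p δ hp m hd hm hδ w.1.length w.2.length (hL w (by simp))
    refine ⟨C2 + C1, ENNReal.add_ne_top.2 ⟨hC2, hC1⟩, fun f g hf hg => ?_⟩
    have : (fun x => jb x ^ δ • lsum f g (w :: L) x) = 
        (fun x => jb x ^ δ • (dW w.1 f x * dW w.2 g x)) + fun x => jb x ^ δ • lsum f g L x := by
      ext x; simp [lsum, mul_add]
    rw [this, add_mul]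
    have hA : Continuous (fun x => jb x ^ δ • (dW w.1 f x * dW w.2 g x)) := 
      (cont_jb δ).smul ((sm_dW hf _).continuous.mul (sm_dW hg _).continuous)
    have hB : Continuous (fun x => jb x ^ δ • lsum f g L x) := 
      (cont_jb δ).smul (sm_lsum hf hg L).continuous
    refine (eLpNorm_add_le hA.aestronglyMeasurable hB.aestronglyMeasurable (by simpa using hp)).trans ?_
    exact add_le_add (h2 f g hf hg _ _ rfl rfl) (h1 f g hf hg)

lemma eN_mul (p δ : ℝ) (hp : 1 ≤ p) (m : ℕ) (hd : 1 ≤ d) (hm : (d : ℝ) / p < m) (hδ : 0 ≤ δ) :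
    ∃ C : ℝ≥0∞, C ≠ ∞ ∧ ∀ f g : EE → ℝ, ContDiff ℝ (⊤ : ℕ∞) f → ContDiff ℝ (⊤ : ℕ∞) g →
      eN m (ENNReal.ofReal p) δ (fun x => f x * g x) ≤ 
        C * (eN m (ENNReal.ofReal p) δ f * eN m (ENNReal.ofReal p) δ g) := by
  have h : ∀ α : Fin d → Fin (m + 1), ∃ C : ℝ≥0∞, C ≠ ∞ ∧ (∑ i, (α i : ℕ) ≤ m → 
      ∀ f g : EE → ℝ, ContDiff ℝ (⊤ : ℕ∞) f → ContDiff ℝ (⊤ : ℕ∞) g →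
      eLpNorm (fun x => jb x ^ δ • mderiv (fun i => (α i : ℕ)) (fun x => f x * g x) x) (ENNReal.ofReal p) volume ≤ 
        C * (eN m (ENNReal.ofReal p) δ f * eN m (ENNReal.ofReal p) δ g)) := by
    intro α
    by_cases hα : ∑ i, (α i : ℕ) ≤ m
    · obtain ⟨C, hC, h⟩ := lsum_est (d := d) p δ hp m hd hm hδ (spl (wd fun i => (α i : ℕ))) (by
        intro w hw
        rw [spl_len _ w hw, length_wd]; exact hα)
      refine ⟨C, hC, fun _ f g hf hg => ?_⟩
      rw [mderiv_eq, leibniz hf hg]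
      exact h f g hf hg
    · exact ⟨0, by simp, fun h => absurd h hα⟩
  choose C hC h using h
  refine ⟨∑ α ∈ Finset.univ.filter (fun α : Fin d → Fin (m + 1) => ∑ i, (α i : ℕ) ≤ m), C α,
    ENNReal.sum_ne_top.2 fun α _ => hC α, fun f g hf hg => ?_⟩
  rw [Finset.sum_mul]
  refine Finset.sum_le_sum fun α hα => ?_
  exact h α (by simpa using hα) f g hf hg

end WS

/-- The weighted Sobolev space `H^{m,p}_δ(ℝ^d)` is a Banach algebra for `m > d/p`, `δ ≥ 0`:
`‖fg‖_{H^{m,p}_δ} ≤ C ‖f‖_{H^{m,p}_δ} ‖g‖_{H^{m,p}_δ}`. -/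
theorem stmt19 (d : ℕ) (hd : 1 ≤ d) (p : ℝ) (hp : 1 ≤ p) (m : ℕ) (δ : ℝ)
    (hm : (d : ℝ) / p < m) (hδ : 0 ≤ δ) :
    ∃ C : ℝ, 0 < C ∧ ∀ f g : EuclideanSpace ℝ (Fin d) → ℝ,
      ContDiff ℝ (⊤ : ℕ∞) f → HasCompactSupport f → ContDiff ℝ (⊤ : ℕ∞) g → HasCompactSupport g →
        Hnorm d m p δ (fun x => f x * g x) ≤ C * Hnorm d m p δ f * Hnorm d m p δ g := by
  obtain ⟨C, hC, h⟩ := WS.eN_mul (d := d) p δ hp m hd hm hδ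
  refine ⟨C.toReal + 1, by positivity, fun f g hf hfc hg hgc => ?_⟩
  have hfg : ContDiff ℝ (⊤ : ℕ∞) (fun x => f x * g x) := hf.mul hg
  have hfgc : HasCompactSupport (fun x => f x * g x) := hfc.mul_right
  rw [WS.Hnorm_eq hf hfc, WS.Hnorm_eq hg hgc, WS.Hnorm_eq hfg hfgc]
  have h1 := ENNReal.toReal_mono (ENNReal.mul_ne_top hC (ENNReal.mul_ne_top
    (WS.eN_ne_top hf hfc) (WS.eN_ne_top hg hgc))) (h f g hf hg)
  rw [ENNReal.toReal_mul, ENNReal.toReal_mul] at h1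
  refine h1.trans ?_
  rw [mul_assoc]
  gcongr
  linarith
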